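/- Let X be an isotropic log-concave random vector in ℝ^d with density f. Then −log f(0) ≤ Ent(X) ≤ −log f(0) + d. -/

import Mathlib

/-!
Write `φ = -log f`, `d` for the dimension and `m` for the barycenter of `f`. Jensen's inequality
for `φ` under the law of density `f` is `φ m ≤ Ent f`.

For the upper bound, let `K` be a closed convex set on which `φ ≤ 0` and let `P` be the
metric projection onto `K`. For `0 < t < 1` the map `T x = t x + (1 - t) P x` satisfies
`‖T x - T y‖ ≥ t ‖x - y‖` and `φ (T x) ≤ t φ x`, and it preserves `Kᶜ`; changing variables yields
`∫_{Kᶜ} exp (-t φ) ≤ t⁻ᵈ ∫_{Kᶜ} exp (-φ)`. This is an equality at `t = 1`, and comparing derivatives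
there gives `∫_{Kᶜ} φ exp (-φ) ≤ d ∫_{Kᶜ} exp (-φ)`, which replaces the integration by parts of
`∇φ(x) · x` and needs no differentiability. It is applied to `φ - c`, usually with `K` the single
point `m` and `c = φ m`. Since `Real.log 0 = 0`, however, `f` may vanish on a non-null part of
`{φ = 0}`; then `φ ≥ 0`, and one takes `K = {φ ≤ 0}` and `c = 0`.
-/

open MeasureTheory Real

noncomputable def Ent {d : ℕ} (f : EuclideanSpace ℝ (Fin d) → ℝ) : ℝ :=
  - ∫ x, f x * Real.log (f x)

def IsDensity {d : ℕ} (f : EuclideanSpace ℝ (Fin d) → ℝ) : Prop :=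
  (∀ x, 0 ≤ f x) ∧ Measurable f ∧ (∫ x, f x) = 1

def Isotropic {d : ℕ} (f : EuclideanSpace ℝ (Fin d) → ℝ) : Prop :=
  (∫ x, f x • x) = 0 ∧
  ∀ i j : Fin d, (∫ x, f x * (x i * x j)) = if i = j then (1:ℝ) else 0

def LogConcave {d : ℕ} (f : EuclideanSpace ℝ (Fin d) → ℝ) : Prop :=
  ConvexOn ℝ Set.univ (fun x => -Real.log (f x))

section Real

lemma exp_neg_mul_one_add_le_exp (t u : ℝ) :
    exp (-u) * (1 + (1 - t) * u) ≤ exp (-(t * u)) := by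
  rw [show -(t * u) = -u + (1 - t) * u by ring, exp_add]
  gcongr
  linarith [add_one_le_exp ((1 - t) * u)]

lemma le_natCast_mul_of_forall_add_le_inv_pow_mul {d : ℕ} {M N : ℝ} (hM : 0 ≤ M)
    (h : ∀ t ∈ Set.Ioo (0 : ℝ) 1, M + (1 - t) * N ≤ t⁻¹ ^ d * M) : N ≤ d * M := by
  have bound : ∀ t ∈ Set.Ioo (0 : ℝ) 1, t ^ d * N ≤ d * M := by
    rintro t ⟨ht0, ht1⟩
    have cleared : t ^ d * (M + (1 - t) * N) ≤ M := by
      calc t ^ d * (M + (1 - t) * N) ≤ t ^ d * (t⁻¹ ^ d * M) := by gcongr; exact h t ⟨ht0, ht1⟩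
        _ = M := by rw [inv_pow]; field_simp
    have bernoulli : 1 + d * (t - 1) ≤ t ^ d := by
      simpa using one_add_mul_le_pow (a := t - 1) (by linarith) d
    have : (1 - t) * (t ^ d * N) ≤ (1 - t) * (d * M) := by
      linarith [mul_le_mul_of_nonneg_right bernoulli hM]
    exact le_of_mul_le_mul_left this (by linarith)
  have lim : Filter.Tendsto (fun t : ℝ => t ^ d * N) (nhdsWithin 1 (Set.Iio 1)) (nhds N) := by
    have : Continuous fun t : ℝ => t ^ d * N := by fun_prop
    simpa using (this.tendsto 1).mono_left nhdsWithin_le_nhds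
  refine le_of_tendsto lim ?_
  filter_upwards [Ioo_mem_nhdsLT zero_lt_one] with t ht using bound t ht

end Real

section Measure

variable {α : Type*} [MeasurableSpace α] {μ : Measure α} {φ : α → ℝ}

lemma integrable_exp_neg_mul_of_le {g : α → ℝ} (hφ : AEStronglyMeasurable φ μ)
    (hgφ : ∀ x, g x ≤ φ x) (hg : Integrable (fun x => exp (-φ x) * g x) μ)
    (hhalf : Integrable (fun x => exp (-(1 / 2 * φ x))) μ) :
    Integrable (fun x => exp (-φ x) * φ x) μ := by
  refine integrable_of_le_of_le ?_ (.of_forall fun x => ?_) (.of_forall fun x => ?_)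
    hg (hhalf.const_mul 2)
  · exact (continuous_exp.comp_aestronglyMeasurable hφ.neg).mul hφ
  · exact mul_le_mul_of_nonneg_left (hgφ x) (exp_pos _).le
  · linarith [exp_neg_mul_one_add_le_exp (1 / 2) (φ x), exp_pos (-φ x)]

lemma integral_exp_neg_mul_le_of_forall_dilation {d : ℕ}
    (hexp : Integrable (fun x => exp (-φ x)) μ)
    (hmul : Integrable (fun x => exp (-φ x) * φ x) μ)
    (hint : ∀ t ∈ Set.Ioo (0 : ℝ) 1, Integrable (fun x => exp (-(t * φ x))) μ)
    (hle : ∀ t ∈ Set.Ioo (0 : ℝ) 1,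
      ∫ x, exp (-(t * φ x)) ∂μ ≤ t⁻¹ ^ d * ∫ x, exp (-φ x) ∂μ) :
    ∫ x, exp (-φ x) * φ x ∂μ ≤ d * ∫ x, exp (-φ x) ∂μ := by
  refine le_natCast_mul_of_forall_add_le_inv_pow_mul (integral_nonneg fun x => (exp_pos _).le)
    fun t ht => le_trans ?_ (hle t ht)
  rw [← integral_const_mul, ← integral_add hexp (hmul.const_mul _)]
  refine integral_mono (hexp.add (hmul.const_mul _)) (hint t ht) fun x => ?_
  have := exp_neg_mul_one_add_le_exp t (φ x)
  simp only
  linarith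

end Measure

section MetricProjection

variable {E : Type*} [NormedAddCommGroup E] [InnerProductSpace ℝ E] {K : Set E} {P : E → E}

/-- `P` is the metric projection (nearest-point map) onto the convex set `K`, encoded by the
variational inequality that characterizes the nearest point. -/
structure IsMetricProj (K : Set E) (P : E → E) : Prop where
  mem : ∀ x, P x ∈ K
  inner_nonpos : ∀ x, ∀ w ∈ K, inner ℝ (x - P x) (w - P x) ≤ 0

lemma exists_isMetricProj (hne : K.Nonempty) (hcomplete : IsComplete K) (hK : Convex ℝ K) :
    ∃ P, IsMetricProj K P := by
  choose P hPK hP using exists_norm_eq_iInf_of_complete_convex hne hcomplete hK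
  exact ⟨P, hPK, fun x => (norm_eq_iInf_iff_real_inner_le_zero hK (hPK x)).1 (hP x)⟩

namespace IsMetricProj

lemma norm_sub_sq_le_inner (hP : IsMetricProj K P) (x y : E) :
    ‖P x - P y‖ ^ 2 ≤ inner ℝ (x - y) (P x - P y) := by
  have hx := hP.inner_nonpos x (P y) (hP.mem y)
  have hy := hP.inner_nonpos y (P x) (hP.mem x)
  rw [← real_inner_self_eq_norm_sq]
  simp only [inner_sub_left, inner_sub_right] at *
  linarith

lemma lipschitzWith_one (hP : IsMetricProj K P) : LipschitzWith 1 P := by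
  refine LipschitzWith.mk_one fun x y => ?_
  rw [dist_eq_norm, dist_eq_norm]
  have h := (hP.norm_sub_sq_le_inner x y).trans (real_inner_le_norm _ _)
  rw [sq] at h
  by_contra! hlt
  exact h.not_gt (mul_lt_mul_of_pos_right hlt ((norm_nonneg _).trans_lt hlt))

lemma antilipschitzWith_convexComb (hP : IsMetricProj K P) {t : ℝ} (ht0 : 0 < t) (ht1 : t ≤ 1) :
    AntilipschitzWith t⁻¹.toNNReal fun x => t • x + (1 - t) • P x := by
  refine AntilipschitzWith.of_le_mul_dist fun x y => ?_
  set u := x - y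
  set v := P x - P y
  have huv : 0 ≤ inner ℝ u v := (sq_nonneg _).trans (hP.norm_sub_sq_le_inner x y)
  have hsub : t • x + (1 - t) • P x - (t • y + (1 - t) • P y) = t • u + (1 - t) • v := by
    simp only [u, v]; module
  have hinner : t * ‖u‖ ^ 2 ≤ ‖u‖ * ‖t • u + (1 - t) • v‖ := by
    refine le_trans ?_ (real_inner_le_norm _ _)
    rw [inner_add_right, inner_smul_right, inner_smul_right, real_inner_self_eq_norm_sq]
    exact le_add_of_nonneg_right (mul_nonneg (by linarith) huv)
  rw [dist_eq_norm, dist_eq_norm, hsub, coe_toNNReal _ (by positivity), inv_mul_eq_div,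
    le_div_iff₀ ht0]
  rcases (norm_nonneg u).eq_or_lt with hu | hu
  · rw [← hu, zero_mul]
    exact norm_nonneg _
  · exact le_of_mul_le_mul_left (by linarith) hu

lemma mapsTo_compl_convexComb (hP : IsMetricProj K P) {t : ℝ} (ht0 : 0 < t) :
    Set.MapsTo (fun x => t • x + (1 - t) • P x) Kᶜ Kᶜ := by
  intro x hx hmem
  have h := hP.inner_nonpos x _ hmem
  rw [show t • x + (1 - t) • P x - P x = t • (x - P x) by module, inner_smul_right] at h
  have hzero : x - P x = 0 := real_inner_self_nonpos.1 (nonpos_of_mul_nonpos_right h ht0)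
  exact hx (sub_eq_zero.1 hzero ▸ hP.mem x)

end IsMetricProj

end MetricProjection

section NormedSpace

variable {E : Type*} [NormedAddCommGroup E] [NormedSpace ℝ E]

lemma integrable_smul_id_of_integrable_mul_norm_sq [MeasurableSpace E]
    [OpensMeasurableSpace E] [SecondCountableTopology E] {μ : Measure E} {f : E → ℝ}
    (hf : Integrable f μ) (hf2 : Integrable (fun x => f x * ‖x‖ ^ 2) μ) :
    Integrable (fun x => f x • x) μ := by
  refine (hf.norm.add hf2.norm).mono' (hf.1.smul aestronglyMeasurable_id)
    (.of_forall fun x => ?_)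
  have : ‖x‖ ≤ 1 + ‖x‖ ^ 2 := by nlinarith [sq_nonneg (‖x‖ - 1)]
  calc ‖f x • x‖ = ‖f x‖ * ‖x‖ := norm_smul _ _
    _ ≤ ‖f x‖ * (1 + ‖x‖ ^ 2) := by gcongr
    _ = ‖f x‖ + ‖f x * ‖x‖ ^ 2‖ := by rw [norm_mul, norm_pow, norm_norm, mul_one_add]

variable [FiniteDimensional ℝ E] {φ : E → ℝ}

lemma exists_affine_le_of_convexOn_univ (hφ : ConvexOn ℝ Set.univ φ) :
    ∃ (l : E →L[ℝ] ℝ) (c : ℝ), ∀ x, l x + c ≤ φ x := by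
  obtain ⟨l, c, hle, -⟩ := hφ.exists_affine_le_of_lt (𝕜 := ℝ) (Set.mem_univ 0)
    (sub_one_lt (φ 0)) isClosed_univ
    (hφ.locallyLipschitz.continuous.lowerSemicontinuous.lowerSemicontinuousOn _)
  exact ⟨l, c, fun x => by simpa using hle ⟨x, Set.mem_univ x⟩⟩

variable [MeasurableSpace E] {μ : Measure E}

lemma map_integral_smul_le_integral_mul {f : E → ℝ} (hφ : ConvexOn ℝ Set.univ φ)
    (hf0 : ∀ x, 0 ≤ f x) (hf1 : ∫ x, f x ∂μ = 1) (hfx : Integrable (fun x => f x • x) μ)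
    (hfφ : Integrable (fun x => f x * φ x) μ) :
    φ (∫ x, f x • x ∂μ) ≤ ∫ x, f x * φ x ∂μ := by
  have hf : Integrable f μ := integrable_of_integral_eq_one hf1
  have hmeas : AEMeasurable (fun x => ENNReal.ofReal (f x)) μ := hf.aemeasurable.ennreal_ofReal
  have hfin : ∀ᵐ x ∂μ, ENNReal.ofReal (f x) < ⊤ := .of_forall fun _ => ENNReal.ofReal_lt_top
  have : IsProbabilityMeasure (μ.withDensity fun x => ENNReal.ofReal (f x)) := by
    refine ⟨?_⟩
    rw [withDensity_apply _ .univ, setLIntegral_univ,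
      ← ofReal_integral_eq_lintegral_ofReal hf (.of_forall hf0), hf1, ENNReal.ofReal_one]
  have jensen := hφ.map_integral_le (μ := μ.withDensity fun x => ENNReal.ofReal (f x)) (f := id)
    hφ.locallyLipschitz.continuous.continuousOn isClosed_univ (.of_forall Set.mem_univ)
    (by simpa [integrable_withDensity_iff_integrable_smul₀' hmeas hfin, hf0] using hfx)
    (by simpa [integrable_withDensity_iff_integrable_smul₀' hmeas hfin, hf0] using hfφ)
  simpa [integral_withDensity_eq_integral_toReal_smul₀ hmeas hfin, hf0] using jensen

variable [BorelSpace E] [μ.IsAddHaarMeasure]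

lemma addHaar_preimage_le_of_antilipschitzWith {T : E → E} {C : NNReal}
    (hT : AntilipschitzWith C T) (s : Set E) :
    μ (T ⁻¹' s) ≤ (C : ENNReal) ^ Module.finrank ℝ E * μ s := by
  have hausdorff := hT.hausdorffMeasure_preimage_le (Nat.cast_nonneg (Module.finrank ℝ E)) s
  rw [Measure.isAddLeftInvariant_eq_smul μ (Measure.hausdorffMeasure (Module.finrank ℝ E)),
    Measure.smul_apply, Measure.smul_apply, ENNReal.smul_def, ENNReal.smul_def, smul_eq_mul,
    smul_eq_mul, mul_left_comm]
  gcongr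
  simpa using hausdorff

lemma map_restrict_le_of_antilipschitzWith {T : E → E} {C : NNReal} {S : Set E}
    (hT : AntilipschitzWith C T) (hTm : Measurable T) (hTS : Set.MapsTo T S S) :
    (μ.restrict S).map T ≤ (C : ENNReal) ^ Module.finrank ℝ E • μ.restrict S := by
  refine Measure.le_iff.2 fun B hB => ?_
  rw [Measure.map_apply hTm hB, Measure.restrict_apply (hTm hB), Measure.smul_apply,
    Measure.restrict_apply hB, smul_eq_mul]
  calc μ (T ⁻¹' B ∩ S) ≤ μ (T ⁻¹' (B ∩ S)) := measure_mono fun x hx => ⟨hx.1, hTS hx.2⟩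
    _ ≤ _ := addHaar_preimage_le_of_antilipschitzWith hT _

lemma addHaar_level_eq_zero_of_convexOn_of_lt (hφ : ConvexOn ℝ Set.univ φ) {y : E} {r : ℝ}
    (hy : φ y < r) : μ {x | φ x = r} = 0 := by
  have hC : Convex ℝ {x | φ x ≤ r} := by simpa using hφ.convex_le r
  refine measure_mono_null (fun z (hz : φ z = r) => ?_) (hC.addHaar_frontier μ)
  refine ⟨subset_closure hz.le, fun hzint => ?_⟩
  -- Beyond an interior point `z`, the ray from `y` would stay in the sublevel set, while `φ`
  -- strictly increases along it.
  have hray : Filter.Tendsto (fun s : ℝ => AffineMap.lineMap y z s) (nhdsWithin 1 (Set.Ioi 1))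
      (nhds z) := by
    have : Continuous fun s : ℝ => (AffineMap.lineMap y z s : E) := by fun_prop
    simpa using (this.tendsto 1).mono_left nhdsWithin_le_nhds
  obtain ⟨s, hs, hs1⟩ := ((hray.eventually (mem_interior_iff_mem_nhds.1 hzint)).and
    self_mem_nhdsWithin).exists
  have hs0 : 0 < s := zero_lt_one.trans hs1
  have hseg : z ∈ openSegment ℝ (AffineMap.lineMap y z s) y := by
    refine ⟨s⁻¹, 1 - s⁻¹, by positivity, sub_pos.2 (inv_lt_one_of_one_lt₀ hs1), by ring, ?_⟩
    rw [AffineMap.lineMap_apply_module, smul_add, smul_smul, smul_smul, inv_mul_cancel₀ hs0.ne',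
      mul_sub, inv_mul_cancel₀ hs0.ne']
    module
  have : φ z < φ (AffineMap.lineMap y z s) :=
    hφ.lt_left_of_right_lt trivial trivial hseg (hz ▸ hy)
  exact (hz ▸ this).not_ge hs

lemma exists_convex_forall_neg_log_eq_and_ae_compl_eq_exp {f : E → ℝ}
    (hf0 : ∀ x, 0 ≤ f x) (hlc : ConvexOn ℝ Set.univ fun x => -log (f x)) (x₀ : E) :
    ∃ (K : Set E) (c : ℝ), K.Nonempty ∧ IsClosed K ∧ Convex ℝ K ∧ (∀ x ∈ K, -log (f x) = c) ∧
      c ≤ -log (f x₀) ∧ ∀ᵐ x ∂μ.restrict Kᶜ, f x = exp (- -log (f x)) := by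
  have hexp : ∀ x, -log (f x) ≠ 0 → f x = exp (- -log (f x)) := fun x hx => by
    have hfx : f x ≠ 0 := fun h => hx (by simp [h])
    rw [neg_neg, exp_log ((hf0 x).lt_of_ne' hfx)]
  by_cases hnull : μ {x | -log (f x) = 0} = 0
  · refine ⟨{x₀}, _, Set.singleton_nonempty x₀, isClosed_singleton, convex_singleton x₀,
      by simp, le_rfl, ae_restrict_of_ae ?_⟩
    filter_upwards [measure_eq_zero_iff_ae_notMem.1 hnull] with x hx using hexp x hx
  · have hnonneg : ∀ x, 0 ≤ -log (f x) := fun x => le_of_not_gt fun hx =>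
      hnull (addHaar_level_eq_zero_of_convexOn_of_lt hlc hx)
    obtain ⟨z, hz : -log (f z) = 0⟩ := nonempty_of_measure_ne_zero hnull
    have hKc : IsClosed {x | -log (f x) ≤ 0} :=
      isClosed_le hlc.locallyLipschitz.continuous continuous_const
    refine ⟨{x | -log (f x) ≤ 0}, 0, ⟨z, hz.le⟩, hKc, by simpa using hlc.convex_le 0,
      fun x hx => le_antisymm hx (hnonneg x), hnonneg x₀, ?_⟩
    refine ae_restrict_of_forall_mem hKc.measurableSet.compl fun x hx => hexp x fun h => hx h.le

end NormedSpace

section InnerProductSpace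

variable {E : Type*} [NormedAddCommGroup E] [InnerProductSpace ℝ E] [FiniteDimensional ℝ E]
  [MeasurableSpace E] [BorelSpace E] {μ : Measure E} [μ.IsAddHaarMeasure] {K : Set E} {φ : E → ℝ}

lemma setLIntegral_compl_exp_neg_dilation_le (hKne : K.Nonempty) (hKc : IsClosed K)
    (hK : Convex ℝ K) (hφ : ConvexOn ℝ Set.univ φ) (hφK : ∀ x ∈ K, φ x ≤ 0) {t : ℝ}
    (ht0 : 0 < t) (ht1 : t ≤ 1) :
    ∫⁻ x in Kᶜ, ENNReal.ofReal (exp (-(t * φ x))) ∂μ ≤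
      ENNReal.ofReal t⁻¹ ^ Module.finrank ℝ E *
        ∫⁻ x in Kᶜ, ENNReal.ofReal (exp (-φ x)) ∂μ := by
  obtain ⟨P, hP⟩ := exists_isMetricProj hKne hKc.isComplete hK
  set T : E → E := fun x => t • x + (1 - t) • P x
  have hTm : Measurable T := by
    have := hP.lipschitzWith_one.continuous
    fun_prop
  have hTφ : ∀ x, φ (T x) ≤ t * φ x := fun x =>
    calc φ (T x) ≤ t * φ x + (1 - t) * φ (P x) :=
          hφ.2 trivial trivial ht0.le (sub_nonneg.2 ht1) (by ring)
      _ ≤ t * φ x := add_le_of_nonpos_right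
          (mul_nonpos_of_nonneg_of_nonpos (sub_nonneg.2 ht1) (hφK _ (hP.mem x)))
  have hφm : Measurable φ := hφ.locallyLipschitz.continuous.measurable
  calc ∫⁻ x in Kᶜ, ENNReal.ofReal (exp (-(t * φ x))) ∂μ
      ≤ ∫⁻ x in Kᶜ, ENNReal.ofReal (exp (-φ (T x))) ∂μ := by
        gcongr with x
        exact hTφ x
    _ = ∫⁻ x, ENNReal.ofReal (exp (-φ x)) ∂(μ.restrict Kᶜ).map T := by
        rw [lintegral_map (by fun_prop) hTm]
    _ ≤ ∫⁻ x, ENNReal.ofReal (exp (-φ x))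
          ∂(ENNReal.ofReal t⁻¹ ^ Module.finrank ℝ E • μ.restrict Kᶜ) :=
        lintegral_mono' (map_restrict_le_of_antilipschitzWith
          (hP.antilipschitzWith_convexComb ht0 ht1) hTm (hP.mapsTo_compl_convexComb ht0)) le_rfl
    _ = _ := by rw [lintegral_smul_measure, smul_eq_mul]

lemma integrableOn_compl_exp_neg_dilation (hKne : K.Nonempty) (hKc : IsClosed K)
    (hK : Convex ℝ K) (hφ : ConvexOn ℝ Set.univ φ) (hφK : ∀ x ∈ K, φ x ≤ 0)
    (hexp : IntegrableOn (fun x => exp (-φ x)) Kᶜ μ) {t : ℝ} (ht0 : 0 < t) (ht1 : t ≤ 1) :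
    IntegrableOn (fun x => exp (-(t * φ x))) Kᶜ μ := by
  have hφc := hφ.locallyLipschitz.continuous
  refine ⟨by fun_prop, ?_⟩
  rw [hasFiniteIntegral_iff_ofReal (.of_forall fun x => (exp_pos _).le)]
  refine (setLIntegral_compl_exp_neg_dilation_le hKne hKc hK hφ hφK ht0 ht1).trans_lt
    (ENNReal.mul_lt_top (by simp) ?_)
  rw [← hasFiniteIntegral_iff_ofReal (.of_forall fun x => (exp_pos _).le)]
  exact hexp.2

lemma setIntegral_compl_exp_neg_dilation_le (hKne : K.Nonempty) (hKc : IsClosed K)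
    (hK : Convex ℝ K) (hφ : ConvexOn ℝ Set.univ φ) (hφK : ∀ x ∈ K, φ x ≤ 0)
    (hexp : IntegrableOn (fun x => exp (-φ x)) Kᶜ μ) {t : ℝ} (ht0 : 0 < t) (ht1 : t ≤ 1) :
    ∫ x in Kᶜ, exp (-(t * φ x)) ∂μ ≤
      t⁻¹ ^ Module.finrank ℝ E * ∫ x in Kᶜ, exp (-φ x) ∂μ := by
  have h := setLIntegral_compl_exp_neg_dilation_le (μ := μ) hKne hKc hK hφ hφK ht0 ht1
  rw [← ofReal_integral_eq_lintegral_ofReal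
      (integrableOn_compl_exp_neg_dilation hKne hKc hK hφ hφK hexp ht0 ht1)
      (.of_forall fun x => (exp_pos _).le),
    ← ofReal_integral_eq_lintegral_ofReal hexp (.of_forall fun x => (exp_pos _).le),
    ← ENNReal.ofReal_pow (by positivity), ← ENNReal.ofReal_mul (by positivity)] at h
  exact (ENNReal.ofReal_le_ofReal_iff (mul_nonneg (by positivity)
    (integral_nonneg fun x => (exp_pos _).le))).1 h

lemma integrableOn_compl_exp_neg_mul (hKne : K.Nonempty) (hKc : IsClosed K)
    (hK : Convex ℝ K) (hφ : ConvexOn ℝ Set.univ φ) (hφK : ∀ x ∈ K, φ x ≤ 0)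
    (hexp : IntegrableOn (fun x => exp (-φ x)) Kᶜ μ)
    (hexpx : IntegrableOn (fun x => exp (-φ x) • x) Kᶜ μ) :
    IntegrableOn (fun x => exp (-φ x) * φ x) Kᶜ μ := by
  obtain ⟨l, c, hl⟩ := exists_affine_le_of_convexOn_univ hφ
  refine integrable_exp_neg_mul_of_le hφ.locallyLipschitz.continuous.aestronglyMeasurable hl ?_
    (integrableOn_compl_exp_neg_dilation hKne hKc hK hφ hφK hexp (by norm_num) (by norm_num))
  have hl_int : IntegrableOn (fun x => exp (-φ x) * l x) Kᶜ μ :=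
    (l.integrable_comp hexpx).congr (.of_forall fun x => by simp)
  simp only [mul_add]
  exact hl_int.add (hexp.mul_const c)

lemma setIntegral_compl_exp_neg_mul_le (hKne : K.Nonempty) (hKc : IsClosed K)
    (hK : Convex ℝ K) (hφ : ConvexOn ℝ Set.univ φ) (hφK : ∀ x ∈ K, φ x ≤ 0)
    (hexp : IntegrableOn (fun x => exp (-φ x)) Kᶜ μ)
    (hexpx : IntegrableOn (fun x => exp (-φ x) • x) Kᶜ μ) :
    ∫ x in Kᶜ, exp (-φ x) * φ x ∂μ ≤ Module.finrank ℝ E * ∫ x in Kᶜ, exp (-φ x) ∂μ :=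
  integral_exp_neg_mul_le_of_forall_dilation hexp
    (integrableOn_compl_exp_neg_mul hKne hKc hK hφ hφK hexp hexpx)
    (fun _ ht => integrableOn_compl_exp_neg_dilation hKne hKc hK hφ hφK hexp ht.1 ht.2.le)
    (fun _ ht => setIntegral_compl_exp_neg_dilation_le hKne hKc hK hφ hφK hexp ht.1 ht.2.le)

variable {f : E → ℝ}

lemma integrable_mul_of_ae_compl_eq_exp_neg (hKne : K.Nonempty) (hKc : IsClosed K)
    (hK : Convex ℝ K) (hφ : ConvexOn ℝ Set.univ φ) (hφK : ∀ x ∈ K, φ x = 0)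
    (hf : Integrable f μ) (hfx : Integrable (fun x => f x • x) μ)
    (hfφ : ∀ᵐ x ∂μ.restrict Kᶜ, f x = exp (-φ x)) : Integrable (fun x => f x * φ x) μ := by
  have hsupp : Function.support (fun x => f x * φ x) ⊆ Kᶜ := fun x hx hxK =>
    hx (by simp [hφK x hxK])
  rw [← integrableOn_iff_integrable_of_support_subset hsupp]
  refine (integrableOn_compl_exp_neg_mul hKne hKc hK hφ (fun x hx => (hφK x hx).le)
    (hf.integrableOn.congr hfφ) (hfx.integrableOn.congr ?_)).congr ?_
  all_goals filter_upwards [hfφ] with x hx using by rw [hx]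

lemma integral_mul_le_of_ae_compl_eq_exp_neg (hKne : K.Nonempty) (hKc : IsClosed K)
    (hK : Convex ℝ K) (hφ : ConvexOn ℝ Set.univ φ) (hφK : ∀ x ∈ K, φ x = 0)
    (hf0 : ∀ x, 0 ≤ f x) (hf : Integrable f μ) (hfx : Integrable (fun x => f x • x) μ)
    (hfφ : ∀ᵐ x ∂μ.restrict Kᶜ, f x = exp (-φ x)) :
    ∫ x, f x * φ x ∂μ ≤ Module.finrank ℝ E * ∫ x, f x ∂μ := by
  have hexpx : IntegrableOn (fun x => exp (-φ x) • x) Kᶜ μ := by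
    refine hfx.integrableOn.congr ?_
    filter_upwards [hfφ] with x hx using by rw [hx]
  calc ∫ x, f x * φ x ∂μ = ∫ x in Kᶜ, f x * φ x ∂μ := by
        refine (setIntegral_eq_integral_of_forall_compl_eq_zero fun x hx => ?_).symm
        rw [hφK x (Set.notMem_compl_iff.1 hx), mul_zero]
    _ = ∫ x in Kᶜ, exp (-φ x) * φ x ∂μ := by
        refine integral_congr_ae ?_
        filter_upwards [hfφ] with x hx using by rw [hx]
    _ ≤ Module.finrank ℝ E * ∫ x in Kᶜ, exp (-φ x) ∂μ :=
        setIntegral_compl_exp_neg_mul_le hKne hKc hK hφ (fun x hx => (hφK x hx).le)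
          (hf.integrableOn.congr hfφ) hexpx
    _ = Module.finrank ℝ E * ∫ x in Kᶜ, f x ∂μ := by rw [integral_congr_ae hfφ]
    _ ≤ Module.finrank ℝ E * ∫ x, f x ∂μ :=
        mul_le_mul_of_nonneg_left (setIntegral_le_integral hf (.of_forall hf0))
          (Nat.cast_nonneg _)

lemma exists_le_neg_log_and_integral_mul_sub_le (hf0 : ∀ x, 0 ≤ f x) (hf : Integrable f μ)
    (hfx : Integrable (fun x => f x • x) μ) (hlc : ConvexOn ℝ Set.univ fun x => -log (f x))
    (x₀ : E) :
    ∃ c ≤ -log (f x₀), Integrable (fun x => f x * (-log (f x) - c)) μ ∧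
      ∫ x, f x * (-log (f x) - c) ∂μ ≤ Module.finrank ℝ E * ∫ x, f x ∂μ := by
  obtain ⟨K, c, hKne, hKc, hK, hφK, hc, hfφ⟩ :=
    exists_convex_forall_neg_log_eq_and_ae_compl_eq_exp (μ := μ) hf0 hlc x₀
  -- Normalize to potential `0` on `K` by passing to the density `exp c * f`.
  have hφ : ConvexOn ℝ Set.univ fun x => -log (f x) - c := by
    simp only [sub_eq_add_neg]
    exact hlc.add_const (-c)
  have hφK0 : ∀ x ∈ K, -log (f x) - c = 0 := fun x hx => sub_eq_zero.2 (hφK x hx)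
  have hgx : Integrable (fun x => (exp c * f x) • x) μ := by
    simp only [mul_smul]
    exact hfx.smul (exp c)
  have hgφ : ∀ᵐ x ∂μ.restrict Kᶜ, exp c * f x = exp (-(-log (f x) - c)) := by
    filter_upwards [hfφ] with x hx
    rw [neg_sub, sub_eq_add_neg, exp_add, ← hx]
  have hint := integrable_mul_of_ae_compl_eq_exp_neg hKne hKc hK hφ hφK0 (hf.const_mul _) hgx hgφ
  have hle := integral_mul_le_of_ae_compl_eq_exp_neg hKne hKc hK hφ hφK0
    (fun x => mul_nonneg (exp_pos c).le (hf0 x)) (hf.const_mul _) hgx hgφ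
  simp only [mul_assoc] at hint hle
  rw [integral_const_mul, integral_const_mul, mul_left_comm] at hle
  exact ⟨c, hc, (integrable_const_mul_iff (exp_pos c).ne'.isUnit _).1 hint,
    le_of_mul_le_mul_left hle (exp_pos c)⟩

lemma integrable_mul_neg_log_of_convexOn (hf0 : ∀ x, 0 ≤ f x) (hf : Integrable f μ)
    (hfx : Integrable (fun x => f x • x) μ) (hlc : ConvexOn ℝ Set.univ fun x => -log (f x)) :
    Integrable (fun x => f x * -log (f x)) μ := by
  obtain ⟨c, -, hint, -⟩ := exists_le_neg_log_and_integral_mul_sub_le hf0 hf hfx hlc 0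
  refine (hint.add (hf.mul_const c)).congr (.of_forall fun x => ?_)
  simp only [Pi.add_apply]
  ring

lemma integral_mul_neg_log_le_of_convexOn (hf0 : ∀ x, 0 ≤ f x) (hf1 : ∫ x, f x ∂μ = 1)
    (hfx : Integrable (fun x => f x • x) μ) (hlc : ConvexOn ℝ Set.univ fun x => -log (f x))
    (x₀ : E) : ∫ x, f x * -log (f x) ∂μ ≤ -log (f x₀) + Module.finrank ℝ E := by
  have hf : Integrable f μ := integrable_of_integral_eq_one hf1
  obtain ⟨c, hc, -, hle⟩ := exists_le_neg_log_and_integral_mul_sub_le hf0 hf hfx hlc x₀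
  simp only [mul_sub] at hle
  rw [integral_sub (integrable_mul_neg_log_of_convexOn hf0 hf hfx hlc) (hf.mul_const c),
    integral_mul_const, hf1] at hle
  linarith

theorem entropy_between_neg_log_density_at_zero_general (hf0 : ∀ x, 0 ≤ f x)
    (hf1 : ∫ x, f x ∂μ = 1) (hfx : Integrable (fun x => f x • x) μ)
    (hlc : ConvexOn ℝ Set.univ fun x => -log (f x)) :
    -log (f (∫ x, f x • x ∂μ)) ≤ -∫ x, f x * log (f x) ∂μ ∧
      -∫ x, f x * log (f x) ∂μ ≤ -log (f (∫ x, f x • x ∂μ)) + Module.finrank ℝ E := by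
  have hint := integrable_mul_neg_log_of_convexOn hf0 (integrable_of_integral_eq_one hf1) hfx hlc
  have hneg : -∫ x, f x * log (f x) ∂μ = ∫ x, f x * -log (f x) ∂μ := by
    simp only [mul_neg, integral_neg]
  rw [hneg]
  exact ⟨map_integral_smul_le_integral_mul hlc hf0 hf1 hfx hint,
    integral_mul_neg_log_le_of_convexOn hf0 hf1 hfx hlc _⟩

end InnerProductSpace

lemma Isotropic.integrable_smul {d : ℕ} {f : EuclideanSpace ℝ (Fin d) → ℝ} (hiso : Isotropic f)
    (hf : Integrable f) : Integrable fun x => f x • x := by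
  refine integrable_smul_id_of_integrable_mul_norm_sq hf ?_
  have hcoord : ∀ i, Integrable fun x : EuclideanSpace ℝ (Fin d) => f x * (x i * x i) := fun i =>
    integrable_of_integral_eq_one (by simpa using hiso.2 i i)
  simp only [EuclideanSpace.real_norm_sq_eq, Finset.mul_sum]
  simp only [sq]
  exact integrable_finsetSum Finset.univ fun i _ => hcoord i

/-- For an isotropic log-concave density `f` on `ℝ^d`,
`-log f(0) ≤ Ent(X) ≤ -log f(0) + d`. -/
theorem entropy_between_neg_log_density_at_zero {d : ℕ}
    (f : EuclideanSpace ℝ (Fin d) → ℝ)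
    (hf : IsDensity f) (hiso : Isotropic f) (hlc : LogConcave f) :
    -Real.log (f 0) ≤ Ent f ∧ Ent f ≤ -Real.log (f 0) + d := by
  simpa [Ent, hiso.1] using entropy_between_neg_log_density_at_zero_general hf.1 hf.2.2
    (hiso.integrable_smul (integrable_of_integral_eq_one hf.2.2)) hlc
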